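/- arXiv:2604.11475 — 3 statements merged into one kernel-verified Lean document; each statement's English description precedes it below -/
import Mathlib

section
/- Let K be a field, R = K[x_1,…,x_n], let I and J be monomial ideals of R, and let S ⊆ {1,…,n}. Let π_S : K[x_1,…,x_n] → K[x_i : i ∈ S] be the K-algebra homomorphism with π_S(x_i) = x_i for i ∈ S and π_S(x_j) = 1 for j ∉ S, and for an ideal A of R let A(p) denote the ideal of K[x_i : i ∈ S] generated by π_S(A). Then (I :_R J)(p) = (I(p) :_{K[x_i : i ∈ S]} J(p)). -/
open MvPolynomial

/-- A monomial ideal: an ideal generated by monomials. -/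
def IsMonomialIdeal {K : Type*} [Field K] {n : ℕ} (I : Ideal (MvPolynomial (Fin n) K)) : Prop :=
  ∃ S : Set (Fin n →₀ ℕ), I = Ideal.span ((fun d => monomial d (1 : K)) '' S)

/-- The monomial localization map `π_S : K[x_1,…,x_n] → K[x_i : i ∈ S]` sending
`x_i ↦ x_i` for `i ∈ S` and `x_j ↦ 1` for `j ∉ S`. -/
noncomputable def monLocMap (K : Type*) [Field K] {n : ℕ} (S : Finset (Fin n)) :
    MvPolynomial (Fin n) K →ₐ[K] MvPolynomial {i // i ∈ S} K :=
  aeval fun i => if h : i ∈ S then X ⟨i, h⟩ else 1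

section Retraction

variable {R A : Type*} [CommRing R] [CommRing A] (f : R →+* A) (g : A →+* R)

/-- `x` agrees with its image under the retraction `g ∘ f` up to a factor sent to `1` by `f`. -/
def IsRetractMultiple (x : R) : Prop :=
  ∃ v : R, f v = 1 ∧ x = v * g (f x)

variable {f g}

theorem IsRetractMultiple.one : IsRetractMultiple f g 1 :=
  ⟨1, by simp, by simp⟩

theorem IsRetractMultiple.mul {x y : R} (hx : IsRetractMultiple f g x)
    (hy : IsRetractMultiple f g y) : IsRetractMultiple f g (x * y) := by
  obtain ⟨v, hv, hx⟩ := hx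
  obtain ⟨w, hw, hy⟩ := hy
  refine ⟨v * w, by simp [hv, hw], ?_⟩
  rw [map_mul, map_mul]
  linear_combination y * hx + v * g (f x) * hy

theorem exists_mul_mem_of_mem_map_span {s : Set R} (hs : ∀ x ∈ s, IsRetractMultiple f g x)
    {q : A} (hq : q ∈ Ideal.map f (Ideal.span s)) :
    ∃ u : R, f u = 1 ∧ u * g q ∈ Ideal.span s := by
  rw [Ideal.map_span] at hq
  induction hq using Submodule.span_induction with
  | mem y hy =>
    obtain ⟨x, hx, rfl⟩ := hy
    obtain ⟨v, hv, hxv⟩ := hs x hx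
    exact ⟨v, hv, hxv ▸ Ideal.subset_span hx⟩
  | zero => exact ⟨1, by simp, by simp⟩
  | add y z _ _ hy hz =>
    obtain ⟨u, hu, huy⟩ := hy
    obtain ⟨w, hw, hwz⟩ := hz
    refine ⟨u * w, by simp [hu, hw], ?_⟩
    have h := add_mem (Ideal.mul_mem_left _ w huy) (Ideal.mul_mem_left _ u hwz)
    convert h using 1
    rw [map_add]
    ring
  | smul a y _ hy =>
    obtain ⟨u, hu, huy⟩ := hy
    refine ⟨u, hu, ?_⟩
    convert Ideal.mul_mem_left _ (g a) huy using 1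
    rw [smul_eq_mul, map_mul]
    ring

theorem Ideal.exists_mul_mem_colon {I J : Ideal R} (hJ : J.FG) {r : R}
    (h : ∀ x ∈ J, ∃ u : R, f u = 1 ∧ u * r * x ∈ I) :
    ∃ u : R, f u = 1 ∧ u * r ∈ I.colon (J : Set R) := by
  classical
  obtain ⟨t, rfl⟩ := hJ
  choose! u hu hmem using h
  refine ⟨∏ x ∈ t, u x, ?_, ?_⟩
  · rw [map_prod]
    exact Finset.prod_eq_one fun x hx => hu x (Ideal.subset_span hx)
  · rw [Submodule.mem_colon]
    intro y hy
    rw [smul_eq_mul]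
    refine Submodule.span_induction (p := fun y _ => (∏ x ∈ t, u x) * r * y ∈ I)
      ?_ (by simp) ?_ ?_ hy
    · intro x hx
      rw [← Finset.prod_erase_mul t u hx]
      convert Ideal.mul_mem_left I (∏ x ∈ t.erase x, u x) (hmem x (Ideal.subset_span hx)) using 1
      ring
    · intro x y _ _ hx hy
      rw [mul_add]
      exact add_mem hx hy
    · intro a x _ hx
      rw [smul_eq_mul, mul_left_comm]
      exact Ideal.mul_mem_left I a hx

theorem Ideal.map_colon_le (I J : Ideal R) :
    Ideal.map f (I.colon (J : Set R)) ≤ (Ideal.map f I).colon (Ideal.map f J : Set A) := by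
  rw [Ideal.map_le_iff_le_comap]
  intro r hr
  rw [Ideal.mem_comap, Submodule.mem_colon]
  intro y hy
  rw [smul_eq_mul]
  refine Submodule.span_induction (p := fun y _ => f r * y ∈ Ideal.map f I) ?_ (by simp) ?_ ?_ hy
  · rintro _ ⟨x, hx, rfl⟩
    rw [← map_mul]
    exact Ideal.mem_map_of_mem f (Submodule.mem_colon.mp hr x hx)
  · intro x y _ _ hx hy
    rw [mul_add]
    exact add_mem hx hy
  · intro a x _ hx
    rw [smul_eq_mul, mul_left_comm]
    exact Ideal.mul_mem_left _ a hx

theorem Ideal.map_colon_span_of_isRetractMultiple (hfg : ∀ a, f (g a) = a) {s t : Set R}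
    (hs : ∀ x ∈ s, IsRetractMultiple f g x) (ht : ∀ x ∈ t, IsRetractMultiple f g x)
    (ht_fg : (Ideal.span t).FG) :
    Ideal.map f ((Ideal.span s).colon (Ideal.span t : Set R)) =
      (Ideal.map f (Ideal.span s)).colon (Ideal.map f (Ideal.span t) : Set A) := by
  refine le_antisymm (Ideal.map_colon_le _ _) fun q hq => ?_
  have key : ∀ x ∈ Ideal.span t, ∃ u : R, f u = 1 ∧ u * g q * x ∈ Ideal.span s := by
    intro x hx
    induction hx using Submodule.span_induction with
    | mem x hx =>
      obtain ⟨v, hv, hxv⟩ := ht x hx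
      obtain ⟨u, hu, hmem⟩ := exists_mul_mem_of_mem_map_span hs
        (Submodule.mem_colon.mp hq _ (Ideal.mem_map_of_mem f (Ideal.subset_span hx)))
      refine ⟨u, hu, ?_⟩
      convert Ideal.mul_mem_left _ v hmem using 1
      rw [smul_eq_mul, map_mul]
      linear_combination u * g q * hxv
    | zero => exact ⟨1, by simp, by simp⟩
    | add y z _ _ hy hz =>
      obtain ⟨u, hu, huy⟩ := hy
      obtain ⟨w, hw, hwz⟩ := hz
      refine ⟨u * w, by simp [hu, hw], ?_⟩
      convert add_mem (Ideal.mul_mem_left _ w huy) (Ideal.mul_mem_left _ u hwz) using 1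
      ring
    | smul a y _ hy =>
      obtain ⟨u, hu, huy⟩ := hy
      refine ⟨u, hu, ?_⟩
      rw [smul_eq_mul, mul_left_comm]
      exact Ideal.mul_mem_left _ a huy
  obtain ⟨u, hu, hmem⟩ := Ideal.exists_mul_mem_colon ht_fg key
  have h := Ideal.mem_map_of_mem f hmem
  rwa [map_mul, hu, one_mul, hfg] at h

end Retraction

theorem monLocMap_rename {K : Type*} [Field K] {n : ℕ} (S : Finset (Fin n))
    (p : MvPolynomial {i // i ∈ S} K) : monLocMap K S (rename Subtype.val p) = p := by
  rw [monLocMap, aeval_rename]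
  simp [Function.comp_def]

theorem isRetractMultiple_monomial {K : Type*} [Field K] {n : ℕ} (S : Finset (Fin n))
    (d : Fin n →₀ ℕ) :
    IsRetractMultiple (monLocMap K S : MvPolynomial (Fin n) K →+* MvPolynomial {i // i ∈ S} K)
      (rename Subtype.val : MvPolynomial {i // i ∈ S} K →ₐ[K] MvPolynomial (Fin n) K)
      (monomial d (1 : K)) := by
  have hX (i : Fin n) : IsRetractMultiple
      (monLocMap K S : MvPolynomial (Fin n) K →+* MvPolynomial {i // i ∈ S} K)
      (rename Subtype.val : MvPolynomial {i // i ∈ S} K →ₐ[K] MvPolynomial (Fin n) K)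
      (X i) := by
    by_cases hi : i ∈ S
    · exact ⟨1, by simp, by simp [monLocMap, hi]⟩
    · exact ⟨X i, by simp [monLocMap, hi], by simp [monLocMap, hi]⟩
  rw [monomial_eq, C_1, one_mul]
  refine Finset.prod_induction _ _ (fun _ _ => IsRetractMultiple.mul) IsRetractMultiple.one
    fun i _ => ?_
  induction d i with
  | zero => simpa using IsRetractMultiple.one
  | succ k ih => simpa only [pow_succ] using ih.mul (hX i)

theorem stmt_6 {K : Type*} [Field K] {n : ℕ} (I J : Ideal (MvPolynomial (Fin n) K))
    (hI : IsMonomialIdeal I) (hJ : IsMonomialIdeal J) (S : Finset (Fin n)) :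
    Ideal.map (monLocMap K S) (I.colon J) =
      (Ideal.map (monLocMap K S) I).colon (Ideal.map (monLocMap K S) J) := by
  obtain ⟨s, rfl⟩ := hI
  obtain ⟨t, rfl⟩ := hJ
  exact Ideal.map_colon_span_of_isRetractMultiple
    (f := (monLocMap K S : MvPolynomial (Fin n) K →+* MvPolynomial {i // i ∈ S} K))
    (g := (rename Subtype.val : MvPolynomial {i // i ∈ S} K →ₐ[K] MvPolynomial (Fin n) K))
    (monLocMap_rename S)
    (Set.forall_mem_image.mpr fun d _ => isRetractMultiple_monomial S d)
    (Set.forall_mem_image.mpr fun d _ => isRetractMultiple_monomial S d)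
    (IsNoetherian.noetherian _)
end

section
/- Let K be a field, R = K[x_1,…,x_n], and let I ⊂ R be a monomial ideal. Given positive integers w_1,…,w_n, let h : R → R be the K-algebra homomorphism with h(x_i) = x_i^{w_i}, and let I_W be the ideal generated by h(I). Then I has the phenomenon of fluctuation in colon powers if and only if I_W has the phenomenon of fluctuation in colon powers. -/
open MvPolynomial

/-- `I` has the phenomenon of fluctuation in colon powers. -/
def HasFluctuationInColonPowers {R : Type*} [CommRing R] (I : Ideal R) : Prop :=
  ∃ a b c : ℕ, 0 < a ∧ a < b ∧ b < c ∧
    (((I ^ a).colon I = I ^ (a - 1) ∧ (I ^ b).colon I ≠ I ^ (b - 1) ∧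
        (I ^ c).colon I = I ^ (c - 1)) ∨
      ((I ^ a).colon I ≠ I ^ (a - 1) ∧ (I ^ b).colon I = I ^ (b - 1) ∧
        (I ^ c).colon I ≠ I ^ (c - 1)))

section SplitExtension

variable {R S ι : Type*} [CommRing R] [CommRing S] [Fintype ι] {φ : R →+* S} {π : ι → S →+ R}
  {b : ι → S}

/-- If `S` is generated over `R` by the `b i` with `R`-linear coordinate maps `π i`, an element
lies in the extension of an ideal exactly when all its coordinates lie in the ideal. -/
theorem mem_map_iff_coordinates (hlin : ∀ i g f, π i (φ g * f) = g * π i f)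
    (hsum : ∀ f, f = ∑ i, φ (π i f) * b i) (J : Ideal R) (f : S) :
    f ∈ J.map φ ↔ ∀ i, π i f ∈ J := by
  constructor
  · intro hf i
    induction hf using Submodule.span_induction with
    | mem x hx =>
      obtain ⟨g, hg, rfl⟩ := hx
      rw [← mul_one (φ g), hlin]
      exact J.mul_mem_right _ hg
    | zero => simp
    | add x y _ _ hx hy => rw [map_add]; exact J.add_mem hx hy
    | smul s x hx' _ =>
      clear * - hx' hlin
      induction hx' using Submodule.span_induction generalizing s with
      | mem x hx =>
        obtain ⟨g, hg, rfl⟩ := hx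
        rw [smul_eq_mul, mul_comm, hlin]
        exact J.mul_mem_right _ hg
      | zero => simp
      | add x y _ _ hx hy => rw [smul_add, map_add]; exact J.add_mem (hx s) (hy s)
      | smul t x _ hx => rw [smul_smul]; exact hx _
  · intro h
    rw [hsum f]
    exact Ideal.sum_mem _ fun i _ => Ideal.mul_mem_right _ _ (Ideal.mem_map_of_mem φ (h i))

theorem map_colon_of_coordinates (hlin : ∀ i g f, π i (φ g * f) = g * π i f)
    (hsum : ∀ f, f = ∑ i, φ (π i f) * b i) (I J : Ideal R) :
    (J.map φ).colon (I.map φ : Ideal S) = Ideal.map φ (J.colon I) := by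
  ext f
  rw [mem_map_iff_coordinates hlin hsum]
  simp only [Submodule.mem_colon, SetLike.mem_coe, smul_eq_mul]
  constructor
  · intro h i g hg
    have := (mem_map_iff_coordinates hlin hsum J _).1 (h _ (Ideal.mem_map_of_mem φ hg)) i
    rwa [mul_comm, hlin, mul_comm] at this
  · intro h p hp
    induction hp using Submodule.span_induction with
    | mem x hx =>
      obtain ⟨g, hg, rfl⟩ := hx
      refine (mem_map_iff_coordinates hlin hsum J _).2 fun i => ?_
      rw [mul_comm, hlin, mul_comm]
      exact h i g hg
    | zero => simp
    | add x y _ _ hx hy => rw [mul_add]; exact Ideal.add_mem _ hx hy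
    | smul t x _ hx => rw [smul_eq_mul, mul_left_comm]; exact Ideal.mul_mem_left _ _ hx

theorem map_injective_of_coordinates (hlin : ∀ i g f, π i (φ g * f) = g * π i f)
    (hsum : ∀ f, f = ∑ i, φ (π i f) * b i) (i₀ : ι) (hone : π i₀ 1 = 1) :
    Function.Injective (Ideal.map φ) := by
  refine Function.LeftInverse.injective (g := Ideal.comap φ) fun J => ?_
  refine le_antisymm (fun g hg => ?_) Ideal.le_comap_map
  have := (mem_map_iff_coordinates hlin hsum J _).1 hg i₀
  rwa [← mul_one (φ g), hlin, hone, mul_one] at this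

theorem hasFluctuationInColonPowers_map_iff (hlin : ∀ i g f, π i (φ g * f) = g * π i f)
    (hsum : ∀ f, f = ∑ i, φ (π i f) * b i) (i₀ : ι) (hone : π i₀ 1 = 1) (I : Ideal R) :
    HasFluctuationInColonPowers (I.map φ) ↔ HasFluctuationInColonPowers I := by
  have key (k : ℕ) : (I.map φ ^ k).colon (I.map φ : Ideal S) = I.map φ ^ (k - 1) ↔
      (I ^ k).colon I = I ^ (k - 1) := by
    rw [← Ideal.map_pow, ← Ideal.map_pow, map_colon_of_coordinates hlin hsum,
      (map_injective_of_coordinates hlin hsum i₀ hone).eq_iff]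
  simp only [HasFluctuationInColonPowers, ne_eq, key]

end SplitExtension

section Weights

variable {K : Type*} [Field K] {n : ℕ}

theorem aeval_X_pow_monomial (w : Fin n → ℕ) (d : Fin n →₀ ℕ) (c : K) :
    aeval (fun i => (X i : MvPolynomial (Fin n) K) ^ w i) (monomial d c) =
      monomial (Finsupp.equivFunOnFinite.symm fun i => w i * d i) c := by
  rw [aeval_monomial, monomial_eq, algebraMap_eq, Finsupp.prod_fintype _ _ (by simp),
    Finsupp.prod_fintype _ _ (by simp)]
  simp [pow_mul]

/-- The coordinate of a polynomial along `x ^ r`, when `K[x]` is viewed as a free module over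
itself through `x i ↦ x i ^ w i`. -/
noncomputable def weightCoordinate (w : Fin n → ℕ) (r : ∀ i, Fin (w i)) :
    MvPolynomial (Fin n) K →ₗ[K] MvPolynomial (Fin n) K :=
  open Classical in
  (basisMonomials (Fin n) K).constr K fun e =>
    if ∀ i, e i % w i = r i then
      monomial (Finsupp.equivFunOnFinite.symm fun i => e i / w i) (1 : K)
    else 0

open Classical in
theorem weightCoordinate_monomial (w : Fin n → ℕ) (r : ∀ i, Fin (w i)) (e : Fin n →₀ ℕ) (c : K) :
    weightCoordinate w r (monomial e c) =
      if ∀ i, e i % w i = r i then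
        monomial (Finsupp.equivFunOnFinite.symm fun i => e i / w i) c
      else 0 := by
  have h : monomial e c = c • basisMonomials (Fin n) K e := by simp [smul_monomial]
  rw [h, map_smul, weightCoordinate, Module.Basis.constr_basis]
  split_ifs <;> simp [smul_monomial]

theorem weightCoordinate_aeval_mul (w : Fin n → ℕ) (hw : ∀ i, 1 ≤ w i) (r : ∀ i, Fin (w i))
    (g f : MvPolynomial (Fin n) K) :
    weightCoordinate w r (aeval (fun i => (X i : MvPolynomial (Fin n) K) ^ w i) g * f) =
      g * weightCoordinate w r f := by
  classical
  induction g using MvPolynomial.induction_on' with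
  | monomial d c =>
    induction f using MvPolynomial.induction_on' with
    | monomial e c' =>
      rw [aeval_X_pow_monomial, monomial_mul, weightCoordinate_monomial,
        weightCoordinate_monomial]
      simp only [Finsupp.add_apply, Finsupp.equivFunOnFinite_symm_apply_apply, Nat.mul_add_mod]
      split_ifs
      · rw [monomial_mul]
        congr 2
        ext i
        simp [Nat.mul_add_div (hw i)]
      · rw [mul_zero]
    | add p q hp hq => rw [mul_add, map_add, map_add, mul_add, hp, hq]
  | add p q hp hq => rw [map_add, add_mul, map_add, add_mul, hp, hq]

theorem sum_aeval_weightCoordinate (w : Fin n → ℕ) (hw : ∀ i, 1 ≤ w i)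
    (f : MvPolynomial (Fin n) K) :
    f = ∑ r, aeval (fun i => (X i : MvPolynomial (Fin n) K) ^ w i) (weightCoordinate w r f) *
      monomial (Finsupp.equivFunOnFinite.symm fun i => (r i : ℕ)) 1 := by
  classical
  induction f using MvPolynomial.induction_on' with
  | monomial e c =>
    rw [Finset.sum_eq_single fun i => ⟨e i % w i, Nat.mod_lt _ (hw i)⟩]
    · simp only [weightCoordinate_monomial, implies_true, if_true, aeval_X_pow_monomial,
        monomial_mul, mul_one]
      congr 2
      ext i
      simp [Nat.div_add_mod]
    · intro r _ hr
      rw [weightCoordinate_monomial, if_neg, map_zero, zero_mul]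
      exact fun h => hr (funext fun i => Fin.ext (h i).symm)
    · simp
  | add p q hp hq =>
    simp only [map_add, add_mul, Finset.sum_add_distrib, ← hp, ← hq]

end Weights

theorem stmt_16 {K : Type*} [Field K] {n : ℕ} (I : Ideal (MvPolynomial (Fin n) K))
    (hI : IsMonomialIdeal I) (w : Fin n → ℕ) (hw : ∀ i, 1 ≤ w i) :
    HasFluctuationInColonPowers I ↔
      HasFluctuationInColonPowers
        (Ideal.map (aeval fun i => (X i : MvPolynomial (Fin n) K) ^ w i) I) := by
  have hone : weightCoordinate w (fun i => ⟨0, hw i⟩) (1 : MvPolynomial (Fin n) K) = 1 := by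
    classical
    change weightCoordinate w _ (monomial 0 1) = monomial 0 1
    rw [weightCoordinate_monomial, if_pos (by simp)]
    congr 2
    ext i
    simp
  have hlin := weightCoordinate_aeval_mul (K := K) w hw
  have hsum := sum_aeval_weightCoordinate (K := K) w hw
  generalize aeval (R := K) (fun i => (X i : MvPolynomial (Fin n) K) ^ w i) = φ at hlin hsum ⊢
  exact (hasFluctuationInColonPowers_map_iff (φ := φ.toRingHom)
    (π := fun r => (weightCoordinate w r).toAddMonoidHom) hlin hsum _ hone I).symm
end

section
/- Let K be a field and n ≥ 2 an integer. Then there exist infinitely many monomial ideals in R = K[x_1,…,x_n] that have the phenomenon of fluctuation in colon powers; that is, the set of monomial ideals of R having the phenomenon of fluctuation in colon powers is infinite. -/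
open MvPolynomial

open scoped Pointwise

section MonomialSpan

variable {σ : Type*} (K : Type*) [CommSemiring K]

/-- The ideal generated by the monomials with exponent in `S`. -/
noncomputable def monomialSpan (S : Set (σ →₀ ℕ)) : Ideal (MvPolynomial σ K) :=
  Ideal.span ((fun d => monomial d (1 : K)) '' S)

variable {K}

theorem mem_monomialSpan {S : Set (σ →₀ ℕ)} (hS : IsUpperSet S) {p : MvPolynomial σ K} :
    p ∈ monomialSpan K S ↔ ∀ m ∈ p.support, m ∈ S := by
  rw [monomialSpan, mem_ideal_span_monomial_image]
  exact forall₂_congr fun m _ =>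
    ⟨fun ⟨s, hs, hsm⟩ => hS hsm hs, fun hm => ⟨m, hm, le_rfl⟩⟩

theorem monomial_mem_monomialSpan [Nontrivial K] {S : Set (σ →₀ ℕ)} (hS : IsUpperSet S)
    {d : σ →₀ ℕ} : monomial d (1 : K) ∈ monomialSpan K S ↔ d ∈ S := by
  classical
  simp [mem_monomialSpan hS, support_monomial]

theorem monomialSpan_mul (S T : Set (σ →₀ ℕ)) :
    monomialSpan K S * monomialSpan K T = monomialSpan K (S + T) := by
  rw [monomialSpan, monomialSpan, monomialSpan, Ideal.span_mul_span']
  congr 1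
  exact (Set.image_image2_distrib fun a b => by simp [monomial_mul]).symm

theorem monomial_mul_mem_monomialSpan {S : Set (σ →₀ ℕ)} (hS : IsUpperSet S) (d : σ →₀ ℕ)
    {p : MvPolynomial σ K} :
    monomial d 1 * p ∈ monomialSpan K S ↔ ∀ m ∈ p.support, d + m ∈ S := by
  rw [mem_monomialSpan hS]
  constructor
  · intro h m hm
    apply h
    rwa [mem_support_iff, coeff_monomial_mul, one_mul, ← mem_support_iff]
  · intro h m hm
    rw [mem_support_iff, coeff_monomial_mul'] at hm
    split_ifs at hm with hdm
    · rw [one_mul, ← mem_support_iff] at hm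
      simpa [add_tsub_cancel_of_le hdm] using h _ hm
    · exact absurd rfl hm

end MonomialSpan

section Exponents

variable {σ : Type*} {k : ℕ} {i j : σ}

/-- Exponents of the monomials in `(u, v) ^ N`, where `u = X i ^ k` and `v = X j`. -/
def powerExponents (k : ℕ) (i j : σ) (N : ℕ) : Set (σ →₀ ℕ) :=
  {d | N ≤ d i / k + d j}

/-- Exponents of the monomials in `(u ^ 4, u ^ 3 * v, u * v ^ 3, v ^ 4)`, where `u = X i ^ k` and
`v = X j`. -/
def gapExponents (k : ℕ) (i j : σ) : Set (σ →₀ ℕ) :=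
  {d | 4 ≤ d i / k + d j ∧ ¬(d i / k = 2 ∧ d j = 2)}

theorem isUpperSet_powerExponents (N : ℕ) : IsUpperSet (powerExponents k i j N) := by
  intro d e hde hd
  have hi : d i / k ≤ e i / k := Nat.div_le_div_right (hde i)
  have hj := hde j
  simp only [powerExponents, Set.mem_ofPred_eq] at *
  omega

theorem isUpperSet_gapExponents : IsUpperSet (gapExponents k i j) := by
  intro d e hde hd
  have hi : d i / k ≤ e i / k := Nat.div_le_div_right (hde i)
  have hj := hde j
  simp only [gapExponents, Set.mem_ofPred_eq] at *
  omega

/-- The exponent of `u ^ a * v ^ b`, where `u = X i ^ k` and `v = X j`. -/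
noncomputable def pairExponent (k : ℕ) (i j : σ) (a b : ℕ) : σ →₀ ℕ :=
  Finsupp.single i (k * a) + Finsupp.single j b

theorem pairExponent_apply_left (hij : i ≠ j) (a b : ℕ) : pairExponent k i j a b i = k * a := by
  simp [pairExponent, hij]

theorem pairExponent_apply_right (hij : i ≠ j) (a b : ℕ) : pairExponent k i j a b j = b := by
  simp [pairExponent, hij]

theorem pairExponent_mem_gapExponents (hk : 0 < k) (hij : i ≠ j) {a b : ℕ} :
    pairExponent k i j a b ∈ gapExponents k i j ↔ 4 ≤ a + b ∧ ¬(a = 2 ∧ b = 2) := by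
  simp [gapExponents, pairExponent_apply_left hij, pairExponent_apply_right hij,
    Nat.mul_div_cancel_left _ hk]

theorem pairExponent_add_mem_powerExponents (hk : 0 < k) (hij : i ≠ j) {a b N : ℕ}
    {d : σ →₀ ℕ} : pairExponent k i j a b + d ∈ powerExponents k i j N ↔
      N ≤ a + d i / k + (b + d j) := by
  simp [powerExponents, pairExponent_apply_left hij, pairExponent_apply_right hij,
    Nat.mul_add_div hk]

theorem exists_eq_pairExponent_add (hij : i ≠ j) {a b : ℕ} {d : σ →₀ ℕ}
    (ha : a ≤ d i / k) (hb : b ≤ d j) :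
    ∃ e, pairExponent k i j a b + e = d ∧ e i / k = d i / k - a ∧ e j = d j - b := by
  have hle : pairExponent k i j a b ≤ d := by
    intro l
    by_cases hl : l = i
    · subst hl
      rw [pairExponent_apply_left hij]
      exact (Nat.mul_le_mul_left k ha).trans (Nat.mul_div_le _ _)
    · by_cases hl' : l = j
      · subst hl'
        rwa [pairExponent_apply_right hij]
      · simp [pairExponent, Ne.symm hl, Ne.symm hl']
  refine ⟨d - pairExponent k i j a b, add_tsub_cancel_of_le hle, ?_, ?_⟩
  · rw [Finsupp.tsub_apply, pairExponent_apply_left hij, Nat.sub_mul_div]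
  · rw [Finsupp.tsub_apply, pairExponent_apply_right hij]

theorem div_add_div_le_add_apply_div (d e : σ →₀ ℕ) : d i / k + e i / k ≤ (d + e) i / k := by
  exact Nat.div_add_div_le_add_div

theorem gapExponents_add_gapExponents (hk : 0 < k) (hij : i ≠ j) :
    gapExponents k i j + gapExponents k i j = powerExponents k i j 8 := by
  ext d
  constructor
  · rintro ⟨s, hs, t, ht, rfl⟩
    have := div_add_div_le_add_apply_div (k := k) (i := i) s t
    simp only [gapExponents, powerExponents, Set.mem_ofPred_eq, Finsupp.add_apply] at *
    omega
  · intro hd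
    change 8 ≤ d i / k + d j at hd
    obtain ⟨a, b, ha, hb, hab, hrest⟩ : ∃ a b, a ≤ d i / k ∧ b ≤ d j ∧
        (4 ≤ a + b ∧ ¬(a = 2 ∧ b = 2)) ∧
        (4 ≤ (d i / k - a) + (d j - b) ∧ ¬(d i / k - a = 2 ∧ d j - b = 2)) := by
      generalize d i / k = q at hd
      by_cases hq : 4 ≤ q
      · by_cases hbad : q = 6 ∧ d j = 2
        · exact ⟨3, 1, by omega⟩
        · exact ⟨4, 0, by omega⟩
      · by_cases hbad : q = 2 ∧ d j = 6
        · exact ⟨1, 3, by omega⟩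
        · exact ⟨0, 4, by omega⟩
    obtain ⟨e, he, hei, hej⟩ := exists_eq_pairExponent_add hij ha hb
    refine ⟨_, (pairExponent_mem_gapExponents hk hij).2 hab, e, ?_, he⟩
    simpa only [gapExponents, Set.mem_ofPred_eq, hei, hej] using hrest

theorem powerExponents_add_gapExponents (hk : 0 < k) (hij : i ≠ j) :
    powerExponents k i j 8 + gapExponents k i j = powerExponents k i j 12 := by
  ext d
  constructor
  · rintro ⟨s, hs, t, ht, rfl⟩
    have := div_add_div_le_add_apply_div (k := k) (i := i) s t
    simp only [gapExponents, powerExponents, Set.mem_ofPred_eq, Finsupp.add_apply] at *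
    omega
  · intro hd
    change 12 ≤ d i / k + d j at hd
    obtain ⟨a, b, ha, hb, hab, hrest⟩ : ∃ a b, a ≤ d i / k ∧ b ≤ d j ∧
        (4 ≤ a + b ∧ ¬(a = 2 ∧ b = 2)) ∧ 8 ≤ (d i / k - a) + (d j - b) := by
      generalize d i / k = q at hd
      by_cases hq : 4 ≤ q
      · exact ⟨4, 0, by omega⟩
      · exact ⟨0, 4, by omega⟩
    obtain ⟨e, he, hei, hej⟩ := exists_eq_pairExponent_add hij ha hb
    refine ⟨e, ?_, _, (pairExponent_mem_gapExponents hk hij).2 hab, (add_comm _ _).trans he⟩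
    simpa only [powerExponents, Set.mem_ofPred_eq, hei, hej] using hrest

end Exponents

section GapIdeal

variable {σ : Type*} (K : Type*) {k : ℕ} {i j : σ}

theorem monomialSpan_gapExponents_sq [CommSemiring K] (hk : 0 < k) (hij : i ≠ j) :
    monomialSpan K (gapExponents k i j) ^ 2 = monomialSpan K (powerExponents k i j 8) := by
  rw [pow_two, monomialSpan_mul, gapExponents_add_gapExponents hk hij]

theorem monomialSpan_gapExponents_cube [CommSemiring K] (hk : 0 < k) (hij : i ≠ j) :
    monomialSpan K (gapExponents k i j) ^ 3 = monomialSpan K (powerExponents k i j 12) := by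
  rw [pow_succ, monomialSpan_gapExponents_sq K hk hij, monomialSpan_mul,
    powerExponents_add_gapExponents hk hij]

variable [CommRing K] [Nontrivial K]

theorem colon_gap_sq_ne (hk : 0 < k) (hij : i ≠ j) :
    (monomialSpan K (gapExponents k i j) ^ 2).colon (monomialSpan K (gapExponents k i j)) ≠
      monomialSpan K (gapExponents k i j) := by
  intro h
  have hmem : monomial (pairExponent k i j 2 2) (1 : K) ∈ monomialSpan K (gapExponents k i j) := by
    rw [← h, Submodule.mem_colon]
    intro p hp
    rw [SetLike.mem_coe, mem_monomialSpan isUpperSet_gapExponents] at hp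
    rw [smul_eq_mul, monomialSpan_gapExponents_sq K hk hij,
      monomial_mul_mem_monomialSpan (isUpperSet_powerExponents _)]
    intro m hm
    rw [pairExponent_add_mem_powerExponents hk hij]
    have := (hp m hm).1
    omega
  rw [monomial_mem_monomialSpan isUpperSet_gapExponents,
    pairExponent_mem_gapExponents hk hij] at hmem
  omega

theorem colon_gap_cube (hk : 0 < k) (hij : i ≠ j) :
    (monomialSpan K (gapExponents k i j) ^ 3).colon (monomialSpan K (gapExponents k i j)) =
      monomialSpan K (gapExponents k i j) ^ 2 := by
  apply le_antisymm
  · intro p hp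
    have hu : monomial (pairExponent k i j 4 0) (1 : K) ∈
        monomialSpan K (gapExponents k i j) := by
      rw [monomial_mem_monomialSpan isUpperSet_gapExponents,
        pairExponent_mem_gapExponents hk hij]
      omega
    have hmul := Submodule.mem_colon.1 hp _ hu
    rw [smul_eq_mul, mul_comm, monomialSpan_gapExponents_cube K hk hij,
      monomial_mul_mem_monomialSpan (isUpperSet_powerExponents _)] at hmul
    rw [monomialSpan_gapExponents_sq K hk hij, mem_monomialSpan (isUpperSet_powerExponents _)]
    intro m hm
    have := (pairExponent_add_mem_powerExponents hk hij).1 (hmul m hm)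
    change 8 ≤ m i / k + m j
    omega
  · intro p hp
    rw [Submodule.mem_colon]
    intro q hq
    rw [pow_succ]
    exact Ideal.mul_mem_mul hp hq

theorem hasFluctuationInColonPowers_gap (hk : 0 < k) (hij : i ≠ j) :
    HasFluctuationInColonPowers (monomialSpan K (gapExponents k i j)) := by
  refine ⟨1, 2, 3, by omega, by omega, by omega, Or.inl ⟨?_, ?_, colon_gap_cube K hk hij⟩⟩
  · simp only [pow_one, tsub_self, pow_zero, Ideal.one_eq_top]
    exact eq_top_iff.2 fun p _ =>
      Submodule.mem_colon.2 fun q hq => Ideal.mul_mem_left _ p hq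
  · simpa using colon_gap_sq_ne K hk hij

theorem le_of_monomialSpan_gapExponents_le {l : ℕ} (hk : 0 < k) (hl : 0 < l) (hij : i ≠ j)
    (h : monomialSpan K (gapExponents k i j) ≤ monomialSpan K (gapExponents l i j)) : l ≤ k := by
  have hu : monomial (pairExponent k i j 4 0) (1 : K) ∈ monomialSpan K (gapExponents k i j) := by
    rw [monomial_mem_monomialSpan isUpperSet_gapExponents, pairExponent_mem_gapExponents hk hij]
    omega
  have hle := ((monomial_mem_monomialSpan isUpperSet_gapExponents).1 (h hu)).1
  rw [pairExponent_apply_left hij, pairExponent_apply_right hij, add_zero,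
    Nat.le_div_iff_mul_le hl] at hle
  omega

end GapIdeal

theorem stmt_17 {K : Type*} [Field K] (n : ℕ) (hn : 2 ≤ n) :
    {I : Ideal (MvPolynomial (Fin n) K) |
      IsMonomialIdeal I ∧ HasFluctuationInColonPowers I}.Infinite := by
  have hij : (⟨0, by omega⟩ : Fin n) ≠ ⟨1, by omega⟩ := by simp
  refine Set.infinite_of_injective_forall_mem
    (f := fun k => monomialSpan K (gapExponents (k + 1) ⟨0, by omega⟩ ⟨1, by omega⟩)) ?_
    fun k => ⟨⟨_, rfl⟩, hasFluctuationInColonPowers_gap K k.succ_pos hij⟩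
  intro k l h
  have hlk := le_of_monomialSpan_gapExponents_le K k.succ_pos l.succ_pos hij h.le
  have hkl := le_of_monomialSpan_gapExponents_le K l.succ_pos k.succ_pos hij h.ge
  omega
end
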